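/- Fix an integer d ≥ 1 and let X be a d-regular tree. Let Y'', Y', Y be finite nonempty trees all of whose vertices have degree at most d, and let i : Y'' → Y' and j : Y' → Y be isometric embeddings. Then for every isometric embedding α : Y'' → X and every isometric embedding γ : Y' → X, the cardinality of { β : Y → X | β isometric embedding, β ∘ (j ∘ i) = α } equals the product of the cardinality of { β : Y → X | β isometric embedding, β ∘ j = γ } with the cardinality of { δ : Y' → X | δ isometric embedding, δ ∘ i = α }. -/

import Mathlib

/-- An isometric embedding of simple graphs: an injective map on vertices preserving
the combinatorial (shortest-path) distance. -/
def IsIsomEmb {A B : Type*} (G : SimpleGraph A) (H : SimpleGraph B) (f : A → B) : Prop :=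
  Function.Injective f ∧ ∀ x y : A, H.dist (f x) (f y) = G.dist x y

theorem geo_unique {V : Type*} {G : SimpleGraph V} (hG : G.IsTree) {x y z z' : V}
    (h : G.dist x z + G.dist z y = G.dist x y) (h' : G.dist x z' + G.dist z' y = G.dist x y)
    (he : G.dist x z = G.dist x z') : z = z' := by
  obtain ⟨p, hp⟩ := hG.connected.exists_walk_length_eq_dist x z
  obtain ⟨q, hq⟩ := hG.connected.exists_walk_length_eq_dist z y
  obtain ⟨p', hp'⟩ := hG.connected.exists_walk_length_eq_dist x z'
  obtain ⟨q', hq'⟩ := hG.connected.exists_walk_length_eq_dist z' y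
  have h1 := (p.append q).isPath_of_length_eq_dist (by rw [SimpleGraph.Walk.length_append]; omega)
  have h2 := (p'.append q').isPath_of_length_eq_dist
    (by rw [SimpleGraph.Walk.length_append]; omega)
  have h3 := (hG.existsUnique_path x y).unique h1 h2
  have h4 := congrArg (fun w => w.getVert p.length) h3
  have h5 : p.length = p'.length := by omega
  simp only [SimpleGraph.Walk.getVert_append] at h4
  simpa [h5] using h4

theorem geo_exists {V : Type*} {G : SimpleGraph V} (hG : G.Connected) (x y : V) (n : ℕ)
    (hn : n ≤ G.dist x y) : ∃ z, G.dist x z = n ∧ n + G.dist z y = G.dist x y := by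
  obtain ⟨p, hp⟩ := hG.exists_walk_length_eq_dist x y
  have h1 := SimpleGraph.dist_le (p.take n)
  have h2 := SimpleGraph.dist_le (p.drop n)
  have h3 := hG.dist_triangle (u := x) (v := p.getVert n) (w := y)
  rw [SimpleGraph.Walk.take_length] at h1
  rw [SimpleGraph.Walk.drop_length] at h2
  refine ⟨p.getVert n, ?_, ?_⟩ <;> omega

def GConv {V : Type*} (G : SimpleGraph V) (C : Set V) : Prop :=
  ∀ x ∈ C, ∀ y ∈ C, ∀ z, G.dist x z + G.dist z y = G.dist x y → z ∈ C

theorem gconv_dist {V : Type*} {G : SimpleGraph V} (hG : G.IsTree) {C : Set V} (hC : GConv G C)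
    {a a' : V} (ha' : a' ∈ C) (ha : a ∉ C) (hadj : G.Adj a' a) {x : V} (hx : x ∈ C) :
    G.dist x a = G.dist x a' + 1 := by
  rcases hG.dist_eq_dist_add_one_of_adj x hadj with h | h
  · exact absurd (hC x hx a' ha' a (by
      rw [SimpleGraph.dist_comm (u := a), SimpleGraph.dist_eq_one_iff_adj.2 hadj, h])) ha
  · exact h

theorem gconv_insert {V : Type*} {G : SimpleGraph V} (hG : G.IsTree) {C : Set V} (hC : GConv G C)
    {a a' : V} (ha' : a' ∈ C) (ha : a ∉ C) (hadj : G.Adj a' a) : GConv G (insert a C) := by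
  have key : ∀ x ∈ C, ∀ z, G.dist x z + G.dist z a = G.dist x a → z ∈ insert a C := by
    intro x hx z hz
    by_cases hza : z = a
    · exact Or.inl hza
    right
    have hpos := hG.connected.pos_dist_of_ne hza
    have hxa := gconv_dist hG hC ha' ha hadj hx
    have haa : G.dist a' a = 1 := SimpleGraph.dist_eq_one_iff_adj.2 hadj
    obtain ⟨w, hw1, hw2⟩ := geo_exists hG.connected z a (G.dist z a - 1) (by omega)
    have t1 := hG.connected.dist_triangle (u := x) (v := z) (w := w)
    have t2 := hG.connected.dist_triangle (u := x) (v := w) (w := a)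
    have : w = a' := geo_unique hG (x := x) (y := a) (by omega) (by omega) (by omega)
    subst this
    exact hC x hx w ha' z (by omega)
  rintro x (rfl | hx) y (rfl | hy) z hz
  · left
    rw [SimpleGraph.dist_self] at hz
    exact (hG.connected.dist_eq_zero_iff.1 (by omega)).symm
  · refine key y hy z ?_
    rw [SimpleGraph.dist_comm (u := y), SimpleGraph.dist_comm (u := z) (v := x),
      SimpleGraph.dist_comm (u := y) (v := x)]
    omega
  · exact key x hx z hz
  · exact Or.inr (hC x hx y hy z hz)

def PGood {V : Type*} (G : SimpleGraph V) (R : Set (V × V)) : Prop :=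
  (∀ p ∈ R, ∀ q ∈ R, G.dist p.1 q.1 = G.dist p.2 q.2) ∧
    GConv G (Prod.fst '' R) ∧ GConv G (Prod.snd '' R)

theorem pgood_swap {V : Type*} {G : SimpleGraph V} {R : Set (V × V)} (h : PGood G R) :
    PGood G (Prod.swap '' R) := by
  refine ⟨?_, ?_, ?_⟩
  · rintro _ ⟨p, hp, rfl⟩ _ ⟨q, hq, rfl⟩
    exact (h.1 p hp q hq).symm
  · rw [Set.image_image]; exact h.2.2
  · rw [Set.image_image]; exact h.2.1

theorem pgood_extend {V : Type*} {G : SimpleGraph V} (hG : G.IsTree) [G.LocallyFinite] {d : ℕ}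
    (hreg : G.IsRegularOfDegree d) {R : Set (V × V)} (h : PGood G R) (hne : R.Nonempty)
    (a₀ : V) (ha₀ : a₀ ∉ Prod.fst '' R) :
    ∃ p, p ∉ R ∧ PGood G (insert p R) := by
  classical
  obtain ⟨p₀, hp₀⟩ := hne
  obtain ⟨w⟩ := hG.connected p₀.1 a₀
  obtain ⟨⟨⟨a', a⟩, hadj⟩, -, ha', ha⟩ :=
    w.exists_boundary_dart (Prod.fst '' R) ⟨p₀, hp₀, rfl⟩ ha₀
  simp only at ha' ha hadj
  obtain ⟨⟨a', b'⟩, hR, rfl⟩ := id ha'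
  simp only at ha' ha hadj
  obtain ⟨b, hb, hbR⟩ : ∃ b, G.Adj b' b ∧ b ∉ Prod.snd '' R := by
    by_contra! hcon
    have : ∀ b ∈ G.neighborFinset b', ∃ c, (c, b) ∈ R := by
      intro b hb
      obtain ⟨⟨c, _⟩, hc, rfl⟩ := hcon b (by simpa using hb)
      exact ⟨c, hc⟩
    choose! f hf using this
    have hle : (G.neighborFinset b').card ≤ ((G.neighborFinset a').erase a).card := by
      refine Finset.card_le_card_of_injOn f ?_ ?_
      · intro b hb
        have h1 := h.1 _ hR _ (hf b hb)
        simp only at h1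
        have hb2 : G.Adj b' b := by simpa using hb
        rw [SimpleGraph.dist_eq_one_iff_adj.2 hb2, SimpleGraph.dist_eq_one_iff_adj] at h1
        simp only [Finset.coe_erase, Set.mem_sdiff, Finset.mem_coe, SimpleGraph.mem_neighborFinset,
          Set.mem_singleton_iff]
        exact ⟨h1, fun e => ha ⟨_, hf b hb, e⟩⟩
      · intro b hb c hc hbc
        have h1 := h.1 _ (hf b hb) _ (hf c hc)
        simp only [hbc, SimpleGraph.dist_self] at h1
        exact hG.connected.dist_eq_zero_iff.1 h1.symm
    rw [Finset.card_erase_of_mem (by simpa using hadj), SimpleGraph.card_neighborFinset_eq_degree,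
      SimpleGraph.card_neighborFinset_eq_degree, hreg, hreg] at hle
    have : 0 < G.degree a' := (G.degree_pos_iff_exists_adj a').2 ⟨a, hadj⟩
    rw [hreg] at this
    omega
  have hb' : b' ∈ Prod.snd '' R := ⟨_, hR, rfl⟩
  have key : ∀ p ∈ R, G.dist p.1 a = G.dist p.2 b := by
    intro p hp
    rw [gconv_dist hG h.2.1 ha' ha hadj ⟨p, hp, rfl⟩, gconv_dist hG h.2.2 hb' hbR hb ⟨p, hp, rfl⟩,
      h.1 p hp _ hR]
  refine ⟨(a, b), fun hm => ha ⟨_, hm, rfl⟩, ?_, ?_, ?_⟩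
  · rintro p (rfl | hp) q (rfl | hq)
    · simp
    · rw [SimpleGraph.dist_comm, key q hq, SimpleGraph.dist_comm]
    · exact key p hp
    · exact h.1 p hp q hq
  · rw [Set.image_insert_eq]
    exact gconv_insert hG h.2.1 ha' ha hadj
  · rw [Set.image_insert_eq]
    exact gconv_insert hG h.2.2 hb' hbR hb

theorem gconv_chain {V : Type*} {G : SimpleGraph V} {c : Set (Set (V × V))}
    (hc : IsChain (· ⊆ ·) c) (f : V × V → V) (h : ∀ s ∈ c, GConv G (f '' s)) :
    GConv G (f '' ⋃₀ c) := by
  rintro _ ⟨p, ⟨s, hs, hp⟩, rfl⟩ _ ⟨q, ⟨t, ht, hq⟩, rfl⟩ z hz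
  obtain ⟨u, hu, hsu, htu⟩ := hc.directedOn s hs t ht
  exact Set.image_mono (Set.subset_sUnion_of_mem hu)
    (h u hu _ ⟨p, hsu hp, rfl⟩ _ ⟨q, htu hq, rfl⟩ z hz)

theorem pgood_total {V : Type*} {G : SimpleGraph V} (hG : G.IsTree) [G.LocallyFinite] {d : ℕ}
    (hreg : G.IsRegularOfDegree d) {R : Set (V × V)} (h : PGood G R) (hne : R.Nonempty) :
    ∃ M, R ⊆ M ∧ PGood G M ∧ (∀ a, ∃ b, (a, b) ∈ M) ∧ (∀ b, ∃ a, (a, b) ∈ M) := by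
  obtain ⟨M, hRM, hM⟩ := zorn_subset_nonempty {R | PGood G R} (by
    intro c hc hch _
    refine ⟨⋃₀ c, ⟨?_, ?_, ?_⟩, fun s hs => Set.subset_sUnion_of_mem hs⟩
    · rintro p ⟨s, hs, hp⟩ q ⟨t, ht, hq⟩
      obtain ⟨u, hu, hsu, htu⟩ := hch.directedOn s hs t ht
      exact (hc hu).1 p (hsu hp) q (htu hq)
    · exact gconv_chain hch _ fun s hs => (hc hs).2.1
    · exact gconv_chain hch _ fun s hs => (hc hs).2.2) R h
  have hMg : PGood G M := hM.prop
  have hMne := hne.mono hRM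
  refine ⟨M, hRM, hMg, ?_, ?_⟩
  · intro a
    by_contra! hcon
    obtain ⟨p, hp, hg⟩ := pgood_extend hG hreg hMg hMne a (by
      rintro ⟨⟨x, y⟩, hxy, rfl⟩; exact hcon _ hxy)
    exact hp (hM.le_of_ge hg (Set.subset_insert _ _) (Set.mem_insert _ _))
  · intro b
    by_contra! hcon
    obtain ⟨p, hp, hg⟩ := pgood_extend hG hreg (pgood_swap hMg) (hMne.image _) b (by
      rintro ⟨_, ⟨⟨x, y⟩, hxy, rfl⟩, rfl⟩; exact hcon _ hxy)
    have hg2 := pgood_swap hg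
    rw [Set.image_insert_eq, Set.image_image] at hg2
    simp only [Prod.swap_swap, Set.image_id'] at hg2
    exact hp ⟨p.swap, hM.le_of_ge hg2 (Set.subset_insert _ _) (Set.mem_insert _ _), p.swap_swap⟩

theorem gconv_range {A V : Type*} {H : SimpleGraph A} {G : SimpleGraph V} (hG : G.IsTree)
    (hH : H.Connected) {f : A → V} (hf : IsIsomEmb H G f) : GConv G (Set.range f) := by
  rintro _ ⟨x, rfl⟩ _ ⟨y, rfl⟩ z hz
  obtain ⟨w, hw1, hw2⟩ := geo_exists hH x y (G.dist (f x) z) (by rw [← hf.2]; omega)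
  exact ⟨w, geo_unique hG (x := f x) (y := f y) (by simp only [hf.2]; omega) hz
    (by rw [hf.2, hw1])⟩

theorem exists_aut {A V : Type*} [Nonempty A] {H : SimpleGraph A} {G : SimpleGraph V}
    (hG : G.IsTree) [G.LocallyFinite] {d : ℕ} (hreg : G.IsRegularOfDegree d)
    (hH : H.Connected) {f g : A → V} (hf : IsIsomEmb H G f) (hg : IsIsomEmb H G g) :
    ∃ φ : V ≃ V, (∀ x y, G.dist (φ x) (φ y) = G.dist x y) ∧ ∀ a, φ (f a) = g a := by
  obtain ⟨M, hM, hMg, hl, hr⟩ := pgood_total hG hreg (R := Set.range fun a => (f a, g a)) (by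
    refine ⟨?_, ?_, ?_⟩
    · rintro _ ⟨a, rfl⟩ _ ⟨b, rfl⟩
      simp only [hf.2, hg.2]
    · rw [← Set.range_comp]; exact gconv_range hG hH hf
    · rw [← Set.range_comp]; exact gconv_range hG hH hg) (Set.range_nonempty _)
  choose F hF using hl
  choose K hK using hr
  have hfun : ∀ a b b', (a, b) ∈ M → (a, b') ∈ M → b = b' := by
    intro a b b' h1 h2
    have := hMg.1 _ h1 _ h2
    simp only [SimpleGraph.dist_self] at this
    exact hG.connected.dist_eq_zero_iff.1 this.symm
  have hinj : ∀ a a' b, (a, b) ∈ M → (a', b) ∈ M → a = a' := by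
    intro a a' b h1 h2
    have := hMg.1 _ h1 _ h2
    simp only [SimpleGraph.dist_self] at this
    exact hG.connected.dist_eq_zero_iff.1 this
  refine ⟨⟨F, K, fun a => hinj _ _ _ (hK (F a)) (hF a), fun b => hfun _ _ _ (hF (K b)) (hK b)⟩,
    fun x y => (hMg.1 _ (hF x) _ (hF y)).symm, fun a => hfun _ _ _ (hF (f a)) (hM ⟨a, rfl⟩)⟩

theorem isIsomEmb_comp {A B C : Type*} {G : SimpleGraph A} {H : SimpleGraph B}
    {K : SimpleGraph C} {f : A → B} {g : B → C} (hg : IsIsomEmb H K g) (hf : IsIsomEmb G H f) :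
    IsIsomEmb G K (g ∘ f) :=
  ⟨hg.1.comp hf.1, fun x y => by simp [hg.2, hf.2]⟩

theorem fibre_equiv {A B V : Type*} [Nonempty A] {H : SimpleGraph A} {Y : SimpleGraph B}
    {G : SimpleGraph V}
    (hG : G.IsTree) [G.LocallyFinite] {d : ℕ} (hreg : G.IsRegularOfDegree d)
    (hH : H.Connected) {f g : A → V} (hf : IsIsomEmb H G f) (hg : IsIsomEmb H G g) (j : A → B) :
    Nonempty ({β : B → V | IsIsomEmb Y G β ∧ β ∘ j = f} ≃
      {β : B → V | IsIsomEmb Y G β ∧ β ∘ j = g}) := by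
  obtain ⟨φ, h1, h2⟩ := exists_aut hG hreg hH hf hg
  have hφ : IsIsomEmb G G φ := ⟨φ.injective, h1⟩
  have hφ' : IsIsomEmb G G φ.symm := ⟨φ.symm.injective, fun x y => by rw [← h1]; simp⟩
  refine ⟨⟨fun β => ⟨φ ∘ β.1, isIsomEmb_comp hφ β.2.1, ?_⟩,
    fun β => ⟨φ.symm ∘ β.1, isIsomEmb_comp hφ' β.2.1, ?_⟩, ?_, ?_⟩⟩
  · rw [Function.comp_assoc, β.2.2]; exact funext h2
  · rw [Function.comp_assoc, β.2.2]; funext a; simp [← h2]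
  · intro β; ext; simp
  · intro β; ext; simp

/-- Multiplicativity of the extension counts `[Y : Y'']_{j∘i} = [Y : Y']_j ⬝ [Y' : Y'']_i`
for isometric embeddings of bounded-degree finite trees into a `d`-regular tree. -/
theorem stmt_6 {W VY VY' VY'' : Type*} (d : ℕ) (hd : 1 ≤ d)
    (X : SimpleGraph W) (hXtree : X.IsTree) [X.LocallyFinite]
    (hXreg : X.IsRegularOfDegree d)
    [Fintype VY] [Nonempty VY] (Y : SimpleGraph VY) (hYtree : Y.IsTree)
    [Y.LocallyFinite] (hYdeg : ∀ v : VY, Y.degree v ≤ d)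
    [Fintype VY'] [Nonempty VY'] (Y' : SimpleGraph VY') (hY'tree : Y'.IsTree)
    [Y'.LocallyFinite] (hY'deg : ∀ v : VY', Y'.degree v ≤ d)
    [Fintype VY''] [Nonempty VY''] (Y'' : SimpleGraph VY'') (hY''tree : Y''.IsTree)
    [Y''.LocallyFinite] (hY''deg : ∀ v : VY'', Y''.degree v ≤ d)
    (i : VY'' → VY') (hi : IsIsomEmb Y'' Y' i)
    (j : VY' → VY) (hj : IsIsomEmb Y' Y j)
    (α : VY'' → W) (hα : IsIsomEmb Y'' X α)
    (γ : VY' → W) (hγ : IsIsomEmb Y' X γ) :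
    {β : VY → W | IsIsomEmb Y X β ∧ β ∘ (j ∘ i) = α}.ncard =
      {β : VY → W | IsIsomEmb Y X β ∧ β ∘ j = γ}.ncard *
      {δ : VY' → W | IsIsomEmb Y' X δ ∧ δ ∘ i = α}.ncard := by
  have hfib : ∀ δ : {δ : VY' → W | IsIsomEmb Y' X δ ∧ δ ∘ i = α},
      Nonempty ({β : VY → W | IsIsomEmb Y X β ∧ β ∘ j = δ.1} ≃
        {β : VY → W | IsIsomEmb Y X β ∧ β ∘ j = γ}) := fun δ =>
    fibre_equiv hXtree hXreg hY'tree.connected δ.2.1 hγ j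
  let e : {β : VY → W | IsIsomEmb Y X β ∧ β ∘ (j ∘ i) = α} ≃
      Σ δ : {δ : VY' → W | IsIsomEmb Y' X δ ∧ δ ∘ i = α},
        {β : VY → W | IsIsomEmb Y X β ∧ β ∘ j = δ.1} :=
    { toFun := fun β => ⟨⟨β.1 ∘ j, isIsomEmb_comp β.2.1 hj, β.2.2⟩, ⟨β.1, β.2.1, rfl⟩⟩
      invFun := fun p => ⟨p.2.1, p.2.2.1, by
        rw [← Function.comp_assoc, p.2.2.2]; exact p.1.2.2⟩
      left_inv := fun β => rfl
      right_inv := by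
        rintro ⟨⟨δ, hδ⟩, ⟨β, hβ, hβ'⟩⟩
        simp only at hβ'
        subst hβ'
        rfl }
  rw [mul_comm, ← Nat.card_coe_set_eq, ← Nat.card_coe_set_eq, ← Nat.card_coe_set_eq,
    ← Nat.card_prod]
  exact Nat.card_congr (e.trans ((Equiv.sigmaCongrRight fun δ => (hfib δ).some).trans
    (Equiv.sigmaEquivProd _ _)))
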